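/- Let A and T be finite sets, E ⊆ A × T, and suppose each edge (a, t) ∈ E has weight u(t) ≥ 0 depending only on its task endpoint t. For S ⊆ A let f(S) be the maximum of Σ_{(a,t)∈M} u(t) over all matchings M ⊆ E ∩ (S × T). Suppose S ⊆ A admits a maximum-weight matching M ⊆ E ∩ (S × T) of weight f(S) in which every a ∈ S is matched (every a ∈ S is the first coordinate of some edge of M), and let a₀ ∈ A ∖ S be such that f(S ∪ {a₀}) − f(S) > 0. Then there exists a matching M' ⊆ E ∩ ((S ∪ {a₀}) × T) of weight f(S ∪ {a₀}) in which every vertex of S ∪ {a₀} is matched. -/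

import Mathlib

open Classical

/-- `M` is a matching of a bipartite graph (with vertex sides `A` and `T`): no two distinct
edges of `M` share a first coordinate, and no two distinct edges share a second coordinate. -/
def IsMatching {A T : Type*} (M : Finset (A × T)) : Prop :=
  (∀ e ∈ M, ∀ e' ∈ M, e.1 = e'.1 → e = e') ∧
  (∀ e ∈ M, ∀ e' ∈ M, e.2 = e'.2 → e = e')

/-- `matchVal E w S` is the maximum of `∑_{e ∈ M} w e` over all matchings `M ⊆ E` whose
edges all have their first coordinate (agent endpoint) in `S`. -/
noncomputable def matchVal {A T : Type*} (E : Finset (A × T)) (w : A × T → ℝ)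
    (S : Finset A) : ℝ :=
  sSup ((fun M => ∑ e ∈ M, w e) ''
    {M : Finset (A × T) | M ⊆ E ∧ IsMatching M ∧ ∀ e ∈ M, e.1 ∈ S})

/-!
The weight of a matching is the total utility of the tasks it covers. Hence giving a task `t` with
`0 ≤ u t` to a free agent `a`, after withdrawing it from its current holder if there is one, never
lowers the weight. Among the maximum-weight matchings induced by `S ∪ {a₀}`, take one, `N`, sharing
as many edges as possible with the matching `M` that saturates `S`. If some `a ∈ S` were free in
`N`, giving `a` the task it has in `M` would keep the weight maximal and add an edge of `M` without
removing any. And `a₀` is not free in `N`, since otherwise `N` would be induced by `S` and its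
weight at most `f(S)`.
-/

/-- `M` is a matching induced by `S` in the bipartite graph with edge set `E`, i.e. a matching
`M ⊆ E ∩ (S × T)`. These are the matchings over which `matchVal E w S` is the maximum. -/
def IsInducedMatching {A T : Type*} (E : Finset (A × T)) (S : Finset A) (M : Finset (A × T)) :
    Prop :=
  M ⊆ E ∧ IsMatching M ∧ ∀ e ∈ M, e.1 ∈ S

/-- `M` saturates `S`: every agent of `S` is matched by `M`. Agents outside `S` may be matched
too. -/
def Saturates {A T : Type*} (M : Finset (A × T)) (S : Finset A) : Prop :=
  ∀ a ∈ S, ∃ e ∈ M, e.1 = a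

/-- The exchange step: task `t` is withdrawn from the agents holding it in `M` and given to `a`.
Other edges of `M` at `a` are kept: the operation is meant for an agent `a` that is free in `M`. -/
def reassign {A T : Type*} [DecidableEq A] [DecidableEq T] (M : Finset (A × T)) (a : A) (t : T) :
    Finset (A × T) :=
  insert (a, t) {e ∈ M | e.2 ≠ t}

section MatchVal

variable {A T : Type*} {E M : Finset (A × T)} {S : Finset A}

theorem finite_setOf_isInducedMatching (E : Finset (A × T)) (S : Finset A) :
    {M | IsInducedMatching E S M}.Finite :=
  E.powerset.finite_toSet.subset fun _ hM => Finset.mem_coe.2 (Finset.mem_powerset.2 hM.1)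

theorem isInducedMatching_empty (E : Finset (A × T)) (S : Finset A) : IsInducedMatching E S ∅ := by
  simp [IsInducedMatching, IsMatching]

theorem IsInducedMatching.sum_le_matchVal (hM : IsInducedMatching E S M) (w : A × T → ℝ) :
    ∑ e ∈ M, w e ≤ matchVal E w S :=
  le_csSup ((finite_setOf_isInducedMatching E S).image _).bddAbove ⟨M, hM, rfl⟩

theorem exists_isInducedMatching_sum_eq_matchVal (E : Finset (A × T)) (w : A × T → ℝ)
    (S : Finset A) : ∃ M, IsInducedMatching E S M ∧ ∑ e ∈ M, w e = matchVal E w S :=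
  Set.Nonempty.csSup_mem (Set.Nonempty.image _ ⟨∅, isInducedMatching_empty E S⟩)
    ((finite_setOf_isInducedMatching E S).image _)

theorem IsInducedMatching.exists_fst_eq_of_matchVal_lt [DecidableEq A] {a : A} {w : A × T → ℝ}
    (hM : IsInducedMatching E (insert a S) M) (hlt : matchVal E w S < ∑ e ∈ M, w e) :
    ∃ e ∈ M, e.1 = a := by
  obtain ⟨hME, hMmatch, hMS⟩ := hM
  by_contra! hfree
  have hM_S : IsInducedMatching E S M :=
    ⟨hME, hMmatch, fun e he => Finset.mem_of_mem_insert_of_ne (hMS e he) (hfree e he)⟩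
  exact hlt.not_ge (hM_S.sum_le_matchVal w)

end MatchVal

theorem IsMatching.sum_snd {A T R : Type*} [DecidableEq T] [AddCommMonoid R]
    {M : Finset (A × T)} (hM : IsMatching M) (u : T → R) :
    ∑ e ∈ M, u e.2 = ∑ t ∈ M.image Prod.snd, u t :=
  (Finset.sum_image fun e he e' he' => hM.2 e he e' he').symm

section Reassign

variable {A T : Type*} [DecidableEq A] [DecidableEq T] {E M N : Finset (A × T)} {S : Finset A}
  {a : A} {t : T}

theorem mem_reassign {e : A × T} : e ∈ reassign M a t ↔ e = (a, t) ∨ e ∈ M ∧ e.2 ≠ t := by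
  simp only [reassign, Finset.mem_insert, Finset.mem_filter]

protected theorem IsMatching.reassign (hM : IsMatching M) (hfree : ∀ e ∈ M, e.1 ≠ a) (t : T) :
    IsMatching (reassign M a t) := by
  simp only [IsMatching, mem_reassign]
  constructor
  · rintro e (rfl | ⟨he, -⟩) e' (rfl | ⟨he', -⟩) hfst
    · rfl
    · exact absurd hfst.symm (hfree e' he')
    · exact absurd hfst (hfree e he)
    · exact hM.1 e he e' he' hfst
  · rintro e (rfl | ⟨he, het⟩) e' (rfl | ⟨he', het'⟩) hsnd
    · rfl
    · exact absurd hsnd.symm het'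
    · exact absurd hsnd het
    · exact hM.2 e he e' he' hsnd

protected theorem IsInducedMatching.reassign (hM : IsInducedMatching E S M)
    (hfree : ∀ e ∈ M, e.1 ≠ a) (hatE : (a, t) ∈ E) (haS : a ∈ S) :
    IsInducedMatching E S (reassign M a t) := by
  obtain ⟨hME, hMmatch, hMS⟩ := hM
  refine ⟨fun e he => ?_, hMmatch.reassign hfree t, fun e he => ?_⟩
  all_goals rcases mem_reassign.1 he with rfl | ⟨heM, -⟩
  exacts [hatE, hME heM, haS, hMS e heM]

theorem image_snd_reassign (M : Finset (A × T)) (a : A) (t : T) :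
    (reassign M a t).image Prod.snd = insert t (M.image Prod.snd) := by
  ext s
  simp only [Finset.mem_image, Finset.mem_insert, mem_reassign]
  grind

theorem IsMatching.sum_snd_le_sum_snd_reassign {R : Type*} [AddCommMonoid R] [PartialOrder R]
    [IsOrderedAddMonoid R] {u : T → R} (hM : IsMatching M) (hfree : ∀ e ∈ M, e.1 ≠ a)
    (hut : 0 ≤ u t) : ∑ e ∈ M, u e.2 ≤ ∑ e ∈ reassign M a t, u e.2 := by
  rw [hM.sum_snd, (hM.reassign hfree t).sum_snd, image_snd_reassign]
  refine Finset.sum_le_sum_of_subset_of_nonneg (Finset.subset_insert _ _) fun s hs hsM => ?_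
  rwa [(Finset.mem_insert.1 hs).resolve_right hsM]

theorem IsMatching.inter_reassign (hM : IsMatching M) (hatM : (a, t) ∈ M)
    (hfree : ∀ e ∈ N, e.1 ≠ a) : M ∩ reassign N a t = insert (a, t) (M ∩ N) := by
  have hsnd : ∀ e ∈ M, e ∈ N → e.2 ≠ t := fun e heM heN het =>
    hfree e heN (congrArg Prod.fst (hM.2 e heM (a, t) hatM het))
  ext e
  simp only [Finset.mem_inter, mem_reassign, Finset.mem_insert]
  grind

theorem IsMatching.card_inter_lt_card_inter_reassign (hM : IsMatching M) (hatM : (a, t) ∈ M)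
    (hfree : ∀ e ∈ N, e.1 ≠ a) : (M ∩ N).card < (M ∩ reassign N a t).card := by
  have hatN : (a, t) ∉ M ∩ N := fun h => hfree _ (Finset.mem_inter.1 h).2 rfl
  rw [hM.inter_reassign hatM hfree, Finset.card_insert_of_notMem hatN]
  exact Nat.lt_succ_self _

end Reassign

theorem exists_maximum_isInducedMatching_saturates {A T : Type*} {E M : Finset (A × T)}
    {R S : Finset A} {u : T → ℝ} (hME : M ⊆ E) (hM : IsMatching M) (hu : ∀ e ∈ M, 0 ≤ u e.2)
    (hMR : Saturates M R) (hRS : R ⊆ S) :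
    ∃ N, IsInducedMatching E S N ∧ ∑ e ∈ N, u e.2 = matchVal E (fun e => u e.2) S ∧
      Saturates N R := by
  obtain ⟨N, ⟨hN, hNval⟩, hNmax⟩ := Set.exists_max_image
    {N | IsInducedMatching E S N ∧ ∑ e ∈ N, u e.2 = matchVal E (fun e => u e.2) S}
    (fun N => (M ∩ N).card)
    ((finite_setOf_isInducedMatching E S).subset fun _ hN => hN.1)
    (exists_isInducedMatching_sum_eq_matchVal E (fun e => u e.2) S)
  refine ⟨N, hN, hNval, fun a haR => ?_⟩
  by_contra! hfree
  obtain ⟨⟨a, t⟩, hatM, rfl⟩ := hMR a haR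
  have hN' : IsInducedMatching E S (reassign N a t) :=
    hN.reassign hfree (hME hatM) (hRS haR)
  have hN'val : ∑ e ∈ reassign N a t, u e.2 = matchVal E (fun e => u e.2) S :=
    (hN'.sum_le_matchVal _).antisymm <|
      hNval.symm.trans_le (hN.2.1.sum_snd_le_sum_snd_reassign hfree (hu _ hatM))
  exact (hM.card_inter_lt_card_inter_reassign hatM hfree).not_ge (hNmax _ ⟨hN', hN'val⟩)

theorem matchVal_saturating_general {A T : Type*} [DecidableEq A] {E M : Finset (A × T)}
    {u : T → ℝ} {S : Finset A} {a₀ : A} (hME : M ⊆ E) (hM : IsMatching M)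
    (hu : ∀ e ∈ M, 0 ≤ u e.2) (hMS : Saturates M S)
    (hgain : matchVal E (fun e => u e.2) S < matchVal E (fun e => u e.2) (insert a₀ S)) :
    ∃ N, IsInducedMatching E (insert a₀ S) N ∧
      ∑ e ∈ N, u e.2 = matchVal E (fun e => u e.2) (insert a₀ S) ∧
      Saturates N (insert a₀ S) := by
  obtain ⟨N, hN, hNval, hNS⟩ :=
    exists_maximum_isInducedMatching_saturates hME hM hu hMS (Finset.subset_insert a₀ S)
  have hNa₀ : ∃ e ∈ N, e.1 = a₀ := hN.exists_fst_eq_of_matchVal_lt (hgain.trans_eq hNval.symm)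
  exact ⟨N, hN, hNval, (Finset.forall_mem_insert a₀ S _).2 ⟨hNa₀, hNS⟩⟩

/-- if the edge weights depend only on the task endpoint, `S` admits a
maximum-weight induced matching saturating all of `S`, and adding the agent `a₀ ∉ S` strictly
increases the maximum matching value, then `S ∪ {a₀}` admits a maximum-weight induced
matching saturating all of `S ∪ {a₀}` (Lemma 6.3). -/
theorem matchVal_saturating {A T : Type*} [Fintype A] [Fintype T]
    [DecidableEq A] [DecidableEq T]
    (E : Finset (A × T)) (u : T → ℝ) (hu : ∀ e ∈ E, 0 ≤ u e.2)
    (S : Finset A) (M : Finset (A × T))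
    (hME : M ⊆ E) (hMmatch : IsMatching M) (hMS : ∀ e ∈ M, e.1 ∈ S)
    (hMval : ∑ e ∈ M, u e.2 = matchVal E (fun e => u e.2) S)
    (hMsat : ∀ a ∈ S, ∃ e ∈ M, e.1 = a)
    (a₀ : A) (ha₀ : a₀ ∉ S)
    (hgain : 0 < matchVal E (fun e => u e.2) (insert a₀ S) - matchVal E (fun e => u e.2) S) :
    ∃ M' : Finset (A × T), M' ⊆ E ∧ IsMatching M' ∧ (∀ e ∈ M', e.1 ∈ insert a₀ S) ∧
      ∑ e ∈ M', u e.2 = matchVal E (fun e => u e.2) (insert a₀ S) ∧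
      ∀ a ∈ insert a₀ S, ∃ e ∈ M', e.1 = a := by
  simpa only [IsInducedMatching, Saturates, and_assoc] using matchVal_saturating_general
    hME hMmatch (fun e he => hu e (hME he)) hMsat (sub_pos.1 hgain)
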